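/- Let λ be a partition, n, m ≥ 1 and 1 ≤ i ≤ m−1. Define the lowering operator f_i on B_λ(n,m): apply the i-bracketing rule to w(T); if some letter i is unmatched, f_i(T) is obtained by changing the entry (k,i) of the box corresponding to the rightmost unmatched i into (k,i+1); otherwise f_i(T) is undefined. Define the raising operator e_i: apply the i-bracketing rule to w(T); if some letter i+1 is unmatched, e_i(T) is obtained by changing the entry (k,i+1) of the box corresponding to the leftmost unmatched i+1 into (k,i); otherwise e_i(T) is undefined. Then f_i and e_i are mutually inverse partial maps on B_λ(n,m): if f_i(T) = T' then e_i(T') is defined and equals T, and if e_i(T) = T'' then f_i(T'') is defined and equals T. -/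

import Mathlib

/-- Lexicographic (weak) order on pairs: `(a,b) ≤ (a',b')` iff `a < a'`, or `a = a'` and `b ≤ b'`. -/
def lexLe (p q : ℕ × ℕ) : Prop := p.1 < q.1 ∨ (p.1 = q.1 ∧ p.2 ≤ q.2)

/-- Lexicographic strict order on pairs. -/
def lexLt (p q : ℕ × ℕ) : Prop := p.1 < q.1 ∨ (p.1 = q.1 ∧ p.2 < q.2)

/-- `T` (a total function on positions, row & column both 0-indexed) is a lexicographic
bitableau of shape `lam` with entries in `[n] × [m]`: on the cells of `lam`, entries are pairs
in `{1,…,n} × {1,…,m}`, weakly increasing along rows and strictly increasing down columns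
for the lexicographic order. -/
def IsBitabT (lam : YoungDiagram) (n m : ℕ) (T : ℕ → ℕ → ℕ × ℕ) : Prop :=
  (∀ i j, (i, j) ∈ lam → (1 ≤ (T i j).1 ∧ (T i j).1 ≤ n) ∧ (1 ≤ (T i j).2 ∧ (T i j).2 ≤ m)) ∧
  (∀ i j j', (i, j') ∈ lam → j ≤ j' → lexLe (T i j) (T i j')) ∧
  (∀ i i' j, (i', j) ∈ lam → i < i' → lexLt (T i j) (T i' j))

/-- `i`-th entry of the `a`-weight of `T`: the number of boxes whose entry has first coordinate `i`. -/
def aWtT (lam : YoungDiagram) (T : ℕ → ℕ → ℕ × ℕ) (i : ℕ) : ℕ :=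
  (lam.cells.filter fun c => (T c.1 c.2).1 = i).card

/-- `j`-th entry of the `b`-weight of `T`: the number of boxes whose entry has second coordinate `j`. -/
def bWtT (lam : YoungDiagram) (T : ℕ → ℕ → ℕ × ℕ) (j : ℕ) : ℕ :=
  (lam.cells.filter fun c => (T c.1 c.2).2 = j).card

/-- The list of boxes of `T` in sort-by-top reading order: boxes with first coordinate
`k = 1, …, n` in increasing order, within each group rows from bottom to top, left to right
within each row. -/
def wBoxes (lam : YoungDiagram) (n : ℕ) (T : ℕ → ℕ → ℕ × ℕ) : List (ℕ × ℕ) :=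
  (List.range n).flatMap fun k =>
    ((List.range (lam.colLen 0)).reverse).flatMap fun r =>
      ((List.range (lam.rowLen r)).filter fun c => decide ((T r c).1 = k + 1)).map fun c => (r, c)

/-- The sort-by-top reading word `w(T)`: the second coordinates of the boxes, in sort-by-top
reading order. -/
def wWordT (lam : YoungDiagram) (n : ℕ) (T : ℕ → ℕ → ℕ × ℕ) : List ℕ :=
  (wBoxes lam n T).map fun c => (T c.1 c.2).2

/-- Under the `i`-bracketing rule (each letter `i` becomes `)`, each letter `i+1` becomes `(`,
other letters are ignored), the letter at position `p` of `w` is an unmatched `)` (letter `i`):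
equivalently, every window of `w` ending at `p` contains strictly more letters `i` than
letters `i+1`. -/
def UnmatchedClose (w : List ℕ) (i p : ℕ) : Prop :=
  p < w.length ∧ w.getD p 0 = i ∧
    ∀ q, q ≤ p →
      ((w.drop q).take (p + 1 - q)).count (i + 1) < ((w.drop q).take (p + 1 - q)).count i

/-- Under the `i`-bracketing rule, the letter at position `p` of `w` is an unmatched `(`
(letter `i+1`): equivalently, every window of `w` starting at `p` contains strictly more
letters `i+1` than letters `i`. -/
def UnmatchedOpen (w : List ℕ) (i p : ℕ) : Prop :=
  p < w.length ∧ w.getD p 0 = i + 1 ∧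
    ∀ q, p ≤ q → q < w.length →
      ((w.drop p).take (q + 1 - p)).count i < ((w.drop p).take (q + 1 - p)).count (i + 1)

/-- `LowerRel lam n m i T T'` expresses `f_i(T) = T'`: under the `i`-bracketing rule applied to
`w(T)` some letter `i` is unmatched, and `T'` is obtained from `T` by changing the entry
`(k, i)` of the box corresponding to the rightmost unmatched letter `i` into `(k, i+1)`. -/
def LowerRel (lam : YoungDiagram) (n m i : ℕ) (T T' : ℕ → ℕ → ℕ × ℕ) : Prop :=
  ∃ p, UnmatchedClose (wWordT lam n T) i p ∧
    (∀ p', p < p' → ¬ UnmatchedClose (wWordT lam n T) i p') ∧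
    T' = fun r c =>
      if (r, c) = (wBoxes lam n T).getD p (0, 0) then
        ((T ((wBoxes lam n T).getD p (0, 0)).1 ((wBoxes lam n T).getD p (0, 0)).2).1, i + 1)
      else T r c

/-- `RaiseRel lam n m i T T'` expresses `e_i(T) = T'`: under the `i`-bracketing rule applied to
`w(T)` some letter `i+1` is unmatched, and `T'` is obtained from `T` by changing the entry
`(k, i+1)` of the box corresponding to the leftmost unmatched letter `i+1` into `(k, i)`. -/
def RaiseRel (lam : YoungDiagram) (n m i : ℕ) (T T' : ℕ → ℕ → ℕ × ℕ) : Prop :=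
  ∃ p, UnmatchedOpen (wWordT lam n T) i p ∧
    (∀ p', p' < p → ¬ UnmatchedOpen (wWordT lam n T) i p') ∧
    T' = fun r c =>
      if (r, c) = (wBoxes lam n T).getD p (0, 0) then
        ((T ((wBoxes lam n T).getD p (0, 0)).1 ((wBoxes lam n T).getD p (0, 0)).2).1, i)
      else T r c

/-!
Read the word as a lattice path with an up-step for each letter `i + 1` and a down-step for each
letter `i`. An unmatched `i` is a step to a new strict minimum of the path, and the rightmost one is
the step reaching the global minimum for the first time; dually, the leftmost unmatched `i + 1` is
the step leaving the global minimum for the last time. Turning a down-step into an up-step raises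
everything after it by two, so it exchanges these two situations. The reading order of the boxes
depends only on first coordinates, so the operators change the word in exactly this one letter.
-/

section StrictMinima

variable {ι α : Type*} [LinearOrder ι] [LinearOrder α]

/-- The indices at which `f` is strictly below all of its earlier values. -/
def strictPrefixMinima (f : ι → α) : Set ι := {r | ∀ q < r, f r < f q}

/-- The indices at which `f` is strictly below all of its later values. -/
def strictSuffixMinima (f : ι → α) : Set ι := {r | ∀ q > r, f r < f q}

theorem isGreatest_strictPrefixMinima_iff [WellFoundedLT ι] {f : ι → α} {r : ι} :
    IsGreatest (strictPrefixMinima f) r ↔ (∀ q < r, f r < f q) ∧ ∀ q > r, f r ≤ f q := by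
  refine and_congr_right fun hr => ⟨fun hub q => ?_, fun hle s hs => ?_⟩
  · induction q using WellFoundedLT.induction with
    | ind q ih =>
      intro hrq
      by_contra! hlt
      refine (hub (a := q) fun s hs => ?_).not_gt hrq
      rcases lt_trichotomy s r with hsr | rfl | hrs
      · exact hlt.trans (hr s hsr)
      · exact hlt
      · exact hlt.trans_le (ih s hs hrs)
  · by_contra! hrs
    exact (hs r hrs).not_ge (hle s hrs)

theorem isLeast_strictSuffixMinima_iff [LocallyFiniteOrderBot ι] {f : ι → α} {r : ι} :
    IsLeast (strictSuffixMinima f) r ↔ (∀ q > r, f r < f q) ∧ ∀ q < r, f r ≤ f q := by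
  refine and_congr_right fun hr => ⟨fun hlb => ?_, fun hle s hs => ?_⟩
  · by_contra! hex
    have hfin : {q | q < r ∧ f q < f r}.Finite := (Set.finite_Iio r).subset fun q hq => hq.1
    obtain ⟨q, ⟨hqr, hlt⟩, hmax⟩ := hfin.exists_maximal hex
    refine (hlb (a := q) fun s hs => ?_).not_gt hqr
    rcases lt_trichotomy s r with hsr | rfl | hrs
    · by_contra! hsq
      exact (hmax ⟨hsr, hsq.trans_lt hlt⟩ hs.le).not_gt hs
    · exact hlt
    · exact hlt.trans (hr s hrs)
  · by_contra! hsr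
    exact (hs r hsr).not_ge (hle s hsr)

end StrictMinima

section Words

variable {w : List ℕ} {i p : ℕ}

/-- The lattice path of `w` under the `i`-bracketing rule: the number of letters `i + 1` minus the
number of letters `i` among the first `k` letters. -/
def bracketHeight (w : List ℕ) (i k : ℕ) : ℤ :=
  (w.take k).count (i + 1) - (w.take k).count i

theorem count_window_sub_count_window (w : List ℕ) (i : ℕ) {q k : ℕ} (h : q ≤ k) :
    (((w.drop q).take (k - q)).count (i + 1) : ℤ) - ((w.drop q).take (k - q)).count i =
      bracketHeight w i k - bracketHeight w i q := by
  have htake : w.take k = w.take q ++ (w.drop q).take (k - q) := by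
    rw [← List.take_add, Nat.add_sub_cancel' h]
  simp only [bracketHeight, htake, List.count_append]
  push_cast
  ring

theorem bracketHeight_succ (w : List ℕ) (i k : ℕ) :
    bracketHeight w i (k + 1) = bracketHeight w i k +
      if w[k]? = some (i + 1) then 1 else if w[k]? = some i then -1 else 0 := by
  simp only [bracketHeight, List.take_add_one, List.count_append]
  rcases w[k]? with _ | x
  · simp
  · simp only [Option.toList_some, List.count_singleton, beq_iff_eq, Option.some.injEq]
    split_ifs <;> push_cast <;> omega

theorem bracketHeight_succ_lt_iff :
    bracketHeight w i (p + 1) < bracketHeight w i p ↔ w[p]? = some i := by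
  rw [bracketHeight_succ]
  split_ifs with hup hdown <;> simp_all

theorem bracketHeight_lt_succ_iff :
    bracketHeight w i p < bracketHeight w i (p + 1) ↔ w[p]? = some (i + 1) := by
  rw [bracketHeight_succ]
  split_ifs with hup hdown <;> simp_all

theorem bracketHeight_of_length_le (i : ℕ) {k : ℕ} (h : w.length ≤ k) :
    bracketHeight w i k = bracketHeight w i w.length := by
  simp only [bracketHeight, List.take_of_length_le h, List.take_length]

theorem bracketHeight_set (h : w[p]? = some i) (q : ℕ) :
    bracketHeight (w.set p (i + 1)) i q = bracketHeight w i q + if p < q then 2 else 0 := by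
  have hp : p < w.length := (List.getElem?_eq_some_iff.1 h).1
  induction q with
  | zero => simp [bracketHeight]
  | succ q ih =>
    rw [bracketHeight_succ, bracketHeight_succ, ih]
    rcases lt_trichotomy p q with hpq | rfl | hqp
    · rw [List.getElem?_set_ne hpq.ne, if_pos hpq, if_pos (Nat.lt_succ_of_lt hpq)]
      ring
    · simp only [List.getElem?_set_self hp, h, lt_irrefl, Nat.lt_succ_self, if_true, if_false,
        Option.some.injEq, Nat.left_eq_add, one_ne_zero]
      ring
    · rw [List.getElem?_set_ne hqp.ne', if_neg hqp.not_gt, if_neg (Nat.succ_le_of_lt hqp).not_gt]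
      ring

theorem getElem?_eq_some_iff_getD {α : Type*} {l : List α} {k : ℕ} {x d : α} :
    l[k]? = some x ↔ k < l.length ∧ l.getD k d = x := by
  rw [List.getElem?_eq_some_iff]
  exact ⟨fun ⟨hk, hx⟩ => ⟨hk, by rw [List.getD_eq_getElem _ _ hk, hx]⟩,
    fun ⟨hk, hx⟩ => ⟨hk, by rw [← hx, List.getD_eq_getElem _ _ hk]⟩⟩

theorem unmatchedClose_iff_succ_mem_strictPrefixMinima :
    UnmatchedClose w i p ↔ p + 1 ∈ strictPrefixMinima (bracketHeight w i) := by
  have hwindow : ∀ q ≤ p,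
      (((w.drop q).take (p + 1 - q)).count (i + 1) < ((w.drop q).take (p + 1 - q)).count i ↔
        bracketHeight w i (p + 1) < bracketHeight w i q) := fun q hq => by
    have := count_window_sub_count_window w i (Nat.le_add_right_of_le (k := 1) hq)
    omega
  rw [UnmatchedClose, ← and_assoc, ← getElem?_eq_some_iff_getD]
  constructor
  · exact fun h q hq => (hwindow q (Nat.lt_succ_iff.1 hq)).1 (h.2 q (Nat.lt_succ_iff.1 hq))
  · exact fun h => ⟨bracketHeight_succ_lt_iff.1 (h p p.lt_succ_self),
      fun q hq => (hwindow q hq).2 (h q (Nat.lt_succ_of_le hq))⟩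

theorem unmatchedOpen_iff_mem_strictSuffixMinima :
    UnmatchedOpen w i p ↔ p ∈ strictSuffixMinima (bracketHeight w i) := by
  have hwindow : ∀ q ≥ p,
      (((w.drop p).take (q + 1 - p)).count i < ((w.drop p).take (q + 1 - p)).count (i + 1) ↔
        bracketHeight w i p < bracketHeight w i (q + 1)) := fun q hq => by
    have := count_window_sub_count_window w i (Nat.le_add_right_of_le (k := 1) hq)
    omega
  rw [UnmatchedOpen, ← and_assoc, ← getElem?_eq_some_iff_getD]
  constructor
  · rintro ⟨hletter, hopen⟩ q hpq
    have hp : p < w.length := (List.getElem?_eq_some_iff.1 hletter).1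
    have hbelow : ∀ r, p < r → r ≤ w.length → bracketHeight w i p < bracketHeight w i r
      | r + 1, hpr, hr => (hwindow r (by omega)).1 (hopen r (by omega) hr)
    rcases le_total q w.length with hq | hq
    · exact hbelow q hpq hq
    · exact bracketHeight_of_length_le i hq ▸ hbelow _ hp le_rfl
  · exact fun h => ⟨bracketHeight_lt_succ_iff.1 (h (p + 1) p.lt_succ_self),
      fun q hq _ => (hwindow q hq).2 (h (q + 1) (Nat.lt_succ_of_le hq))⟩

theorem isGreatest_unmatchedClose_iff :
    IsGreatest {q | UnmatchedClose w i q} p ↔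
      (∀ q < p + 1, bracketHeight w i (p + 1) < bracketHeight w i q) ∧
        ∀ q > p + 1, bracketHeight w i (p + 1) ≤ bracketHeight w i q := by
  rw [← isGreatest_strictPrefixMinima_iff]
  simp only [IsGreatest, upperBounds, Set.mem_ofPred_eq,
    unmatchedClose_iff_succ_mem_strictPrefixMinima]
  refine and_congr_right fun _ => ⟨fun h r hr => ?_, fun h q hq => Nat.succ_le_succ_iff.1 (h hq)⟩
  cases r with
  | zero => exact Nat.zero_le _
  | succ q => exact Nat.succ_le_succ (h hr)

theorem isLeast_unmatchedOpen_iff :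
    IsLeast {q | UnmatchedOpen w i q} p ↔
      (∀ q > p, bracketHeight w i p < bracketHeight w i q) ∧
        ∀ q < p, bracketHeight w i p ≤ bracketHeight w i q := by
  simp only [unmatchedOpen_iff_mem_strictSuffixMinima, Set.ofPred_mem_eq,
    isLeast_strictSuffixMinima_iff]

theorem isGreatest_unmatchedClose_iff_isLeast_unmatchedOpen_set (h : w[p]? = some i) :
    IsGreatest {q | UnmatchedClose w i q} p ↔
      IsLeast {q | UnmatchedOpen (w.set p (i + 1)) i q} p := by
  have hstep : bracketHeight w i (p + 1) = bracketHeight w i p - 1 := by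
    simp [bracketHeight_succ, h, sub_eq_add_neg]
  simp only [isGreatest_unmatchedClose_iff, isLeast_unmatchedOpen_iff, bracketHeight_set h,
    lt_irrefl, if_false, hstep]
  constructor
  · rintro ⟨hbefore, hafter⟩
    refine ⟨fun q hpq => ?_, fun q hqp => ?_⟩
    · rw [if_pos hpq]
      rcases (show p + 1 ≤ q from hpq).eq_or_lt with rfl | hpq'
      · linarith
      · linarith [hafter q hpq']
    · rw [if_neg hqp.not_gt]
      linarith [Int.sub_one_lt_iff.1 (hbefore q (Nat.lt_succ_of_lt hqp))]
  · rintro ⟨hafter, hbefore⟩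
    refine ⟨fun q hq => ?_, fun q hq => ?_⟩
    · rcases (Nat.lt_succ_iff.1 hq).eq_or_lt with rfl | hqp
      · exact sub_one_lt _
      · have := hbefore q hqp
        rw [if_neg hqp.not_gt] at this
        linarith
    · have := hafter q (Nat.lt_of_succ_lt hq)
      rw [if_pos (Nat.lt_of_succ_lt hq)] at this
      linarith [Int.add_one_le_iff.2 this]

end Words

section Tableaux

variable {lam : YoungDiagram} {n i p x y : ℕ} {T T' : ℕ → ℕ → ℕ × ℕ}

theorem wBoxes_congr (h : ∀ r c, (T r c).1 = (T' r c).1) : wBoxes lam n T = wBoxes lam n T' := by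
  simp only [wBoxes, h]

theorem nodup_flatMap_of_forall_mem_eq {α β : Type*} {l : List α} {f : α → List β} (g : β → α)
    (hl : l.Nodup) (hf : ∀ a ∈ l, (f a).Nodup) (hg : ∀ a, ∀ b ∈ f a, g b = a) :
    (l.flatMap f).Nodup :=
  List.nodup_flatMap.2 ⟨hf, hl.imp fun hne b hb hb' => hne ((hg _ b hb).symm.trans (hg _ b hb'))⟩

theorem wBoxes_nodup (lam : YoungDiagram) (n : ℕ) (T : ℕ → ℕ → ℕ × ℕ) :
    (wBoxes lam n T).Nodup := by
  refine nodup_flatMap_of_forall_mem_eq (fun b => (T b.1 b.2).1 - 1) List.nodup_range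
    (fun k _ => nodup_flatMap_of_forall_mem_eq Prod.fst (List.nodup_reverse.2 List.nodup_range)
      (fun r _ => ?_) fun r b hb => ?_) fun k b hb => ?_
  · exact (List.nodup_range.filter _).map (Prod.mk_right_injective r)
  · obtain ⟨c, -, rfl⟩ := List.mem_map.1 hb
    rfl
  · simp only [List.mem_flatMap, List.mem_map, List.mem_filter, decide_eq_true_eq] at hb
    obtain ⟨r, -, c, ⟨-, hc⟩, rfl⟩ := hb
    exact Nat.sub_eq_of_eq_add hc

/-- The filling obtained from `T` by replacing the second coordinate of the entry in box `b`
by `x`. -/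
def replaceSnd (T : ℕ → ℕ → ℕ × ℕ) (b : ℕ × ℕ) (x : ℕ) : ℕ → ℕ → ℕ × ℕ :=
  fun r c => if (r, c) = b then ((T b.1 b.2).1, x) else T r c

theorem replaceSnd_fst (T : ℕ → ℕ → ℕ × ℕ) (b : ℕ × ℕ) (x r c : ℕ) :
    (replaceSnd T b x r c).1 = (T r c).1 := by
  unfold replaceSnd
  split_ifs with h
  · rw [← h]
  · rfl

theorem replaceSnd_snd (T : ℕ → ℕ → ℕ × ℕ) (b : ℕ × ℕ) (x r c : ℕ) :
    (replaceSnd T b x r c).2 = if (r, c) = b then x else (T r c).2 := by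
  unfold replaceSnd
  split_ifs <;> rfl

theorem replaceSnd_replaceSnd_snd (T : ℕ → ℕ → ℕ × ℕ) (b : ℕ × ℕ) (x : ℕ) :
    replaceSnd (replaceSnd T b x) b (T b.1 b.2).2 = T := by
  ext r c
  · rw [replaceSnd_fst, replaceSnd_fst]
  · rw [replaceSnd_snd, replaceSnd_snd]
    split_ifs with h
    · rw [← h]
    · rfl

theorem wBoxes_replaceSnd (lam : YoungDiagram) (n : ℕ) (T : ℕ → ℕ → ℕ × ℕ) (b : ℕ × ℕ) (x : ℕ) :
    wBoxes lam n (replaceSnd T b x) = wBoxes lam n T :=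
  wBoxes_congr (replaceSnd_fst T b x)

theorem wWordT_replaceSnd (hp : p < (wBoxes lam n T).length) :
    wWordT lam n (replaceSnd T ((wBoxes lam n T).getD p (0, 0)) x) =
      (wWordT lam n T).set p x := by
  rw [wWordT, wBoxes_replaceSnd, wWordT, List.getD_eq_getElem _ _ hp]
  refine List.ext_getElem (by simp) fun k hk _ => ?_
  rw [List.length_map] at hk
  simp only [List.getElem_map, List.getElem_set, replaceSnd_snd, Prod.mk.eta,
    (wBoxes_nodup lam n T).getElem_inj_iff, eq_comm (a := k)]

/-- `T'` arises from `T` by changing the letter `x` at position `p` of the reading word, that is,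
the second coordinate of the corresponding box, into `y`. -/
def ChangesLetter (lam : YoungDiagram) (n p x y : ℕ) (T T' : ℕ → ℕ → ℕ × ℕ) : Prop :=
  (wWordT lam n T)[p]? = some x ∧ T' = replaceSnd T ((wBoxes lam n T).getD p (0, 0)) y

namespace ChangesLetter

theorem lt_length (h : ChangesLetter lam n p x y T T') : p < (wBoxes lam n T).length := by
  simpa only [wWordT, List.length_map] using (List.getElem?_eq_some_iff.1 h.1).1

theorem wWordT_eq (h : ChangesLetter lam n p x y T T') :
    wWordT lam n T' = (wWordT lam n T).set p y := by
  rw [h.2, wWordT_replaceSnd h.lt_length]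

theorem symm (h : ChangesLetter lam n p x y T T') : ChangesLetter lam n p y x T' T := by
  have hp : p < (wBoxes lam n T).length := h.lt_length
  refine ⟨?_, ?_⟩
  · rw [h.wWordT_eq, List.getElem?_set_self (by simpa only [wWordT, List.length_map] using hp)]
  · have hx : (T ((wBoxes lam n T).getD p (0, 0)).1 ((wBoxes lam n T).getD p (0, 0)).2).2 = x := by
      simpa [wWordT, hp] using h.1
    rw [h.2, wBoxes_replaceSnd, ← hx, replaceSnd_replaceSnd_snd]

theorem comm : ChangesLetter lam n p x y T T' ↔ ChangesLetter lam n p y x T' T :=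
  ⟨symm, symm⟩

end ChangesLetter

theorem lowerRel_iff_exists_changesLetter {m : ℕ} :
    LowerRel lam n m i T T' ↔ ∃ p, ChangesLetter lam n p i (i + 1) T T' ∧
      IsGreatest {q | UnmatchedClose (wWordT lam n T) i q} p := by
  refine exists_congr fun p => ⟨fun ⟨hclose, hlast, hT'⟩ => ?_, fun ⟨⟨_, hT'⟩, hclose, hub⟩ => ?_⟩
  · exact ⟨⟨getElem?_eq_some_iff_getD.2 ⟨hclose.1, hclose.2.1⟩, hT'⟩, hclose,
      fun q hq => not_lt.1 fun hpq => hlast q hpq hq⟩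
  · exact ⟨hclose, fun q hpq hq => (hub hq).not_gt hpq, hT'⟩

theorem raiseRel_iff_exists_changesLetter {m : ℕ} :
    RaiseRel lam n m i T T' ↔ ∃ p, ChangesLetter lam n p (i + 1) i T T' ∧
      IsLeast {q | UnmatchedOpen (wWordT lam n T) i q} p := by
  refine exists_congr fun p => ⟨fun ⟨hopen, hfirst, hT'⟩ => ?_, fun ⟨⟨_, hT'⟩, hopen, hlb⟩ => ?_⟩
  · exact ⟨⟨getElem?_eq_some_iff_getD.2 ⟨hopen.1, hopen.2.1⟩, hT'⟩, hopen,
      fun q hq => not_lt.1 fun hqp => hfirst q hqp hq⟩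
  · exact ⟨hopen, fun q hqp hq => (hlb hq).not_gt hqp, hT'⟩

end Tableaux

theorem stmt_6_general (lam : YoungDiagram) (n m i : ℕ) (T T' : ℕ → ℕ → ℕ × ℕ) :
    LowerRel lam n m i T T' ↔ RaiseRel lam n m i T' T := by
  rw [lowerRel_iff_exists_changesLetter, raiseRel_iff_exists_changesLetter]
  refine exists_congr fun p => ?_
  rw [ChangesLetter.comm (T := T')]
  refine and_congr_right fun hchange => ?_
  rw [hchange.wWordT_eq]
  exact isGreatest_unmatchedClose_iff_isLeast_unmatchedOpen_set hchange.1

/-- The lowering operator `f_i` and raising operator `e_i` are mutually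
inverse partial maps on `B_λ(n,m)`: if `f_i(T) = T'` then `e_i(T')` is defined and equals `T`,
and if `e_i(T) = T''` then `f_i(T'')` is defined and equals `T`. -/
theorem stmt_6 (lam : YoungDiagram) (n m : ℕ) (hn : 1 ≤ n) (hm : 1 ≤ m)
    (i : ℕ) (hi1 : 1 ≤ i) (hi2 : i ≤ m - 1) :
    (∀ T T' : ℕ → ℕ → ℕ × ℕ, IsBitabT lam n m T →
      LowerRel lam n m i T T' → RaiseRel lam n m i T' T) ∧
    (∀ T T'' : ℕ → ℕ → ℕ × ℕ, IsBitabT lam n m T →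
      RaiseRel lam n m i T T'' → LowerRel lam n m i T'' T) := by
  exact ⟨fun T T' _ => (stmt_6_general lam n m i T T').1,
    fun T T'' _ => (stmt_6_general lam n m i T'' T).2⟩
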